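/- arXiv:2411.13465 — 2 statements merged into one kernel-verified Lean document; each statement's English description precedes it below -/
import Mathlib

section
/- Let d ≥ 2, let p be a symmetric probability mass function on ℤ with ψ(s) := Σ_{j∈ℤ} e^{sj} p(j) < ∞ for all s ∈ (−R, R), R > 0, and let H be the almost-sure limit of the spherical averages H_r of the free height field with increment law p on the rooted Cayley tree of order d. Then for every A with 0 < A < (d+1)R there exists a constant B = B(A) < ∞ such that P(|H| ≥ s) ≤ B e^{−As} for all real s ≥ 0. -/
open MeasureTheory ProbabilityTheory Filter Finset Topology

noncomputable section

/-- A non-root vertex of the rooted Cayley tree of order `d`: the first step from the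
root is one of `d+1` children, every further step one of `d` children. -/
abbrev Vertex (d : ℕ) : Type := Fin (d + 1) × List (Fin d)

/-- depth of a non-root vertex -/
def vdepth {d : ℕ} (v : Vertex d) : ℕ := v.2.length + 1

/-- the sphere `W_r` of radius `r ≥ 1`: all vertices of depth `r` -/
def sphereW (d r : ℕ) : Finset (Vertex d) :=
  (Finset.univ : Finset (Fin (d + 1) × (Fin (r - 1) → Fin d))).image
    (fun x => (x.1, List.ofFn x.2))

/-- height at `v`: sum of the increments along the path from the root to `v`
(the prefixes of length `0,…,|v.2|` of the step list of `v` enumerate that path). -/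
def heightAt {d : ℕ} {Ω : Type*} (Y : Vertex d → Ω → ℝ) (v : Vertex d) (ω : Ω) : ℝ :=
  ∑ k ∈ Finset.range (v.2.length + 1), Y (v.1, v.2.take k) ω

/-- spherical average `H_r` of the heights at depth `r` -/
def sphAvg (d : ℕ) {Ω : Type*} (Y : Vertex d → Ω → ℝ) (r : ℕ) (ω : Ω) : ℝ :=
  (((d + 1) * d ^ (r - 1) : ℕ) : ℝ)⁻¹ * ∑ v ∈ sphereW d r, heightAt Y v ω

theorem sum_sphereW {d : ℕ} (m : ℕ) (f : Vertex d → ℝ) :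
    ∑ v ∈ sphereW d (m + 1), f v =
      ∑ i : Fin (d + 1), ∑ g : Fin m → Fin d, f (i, List.ofFn g) := by
  unfold sphereW
  rw [Finset.sum_image, Fintype.sum_prod_type]
  · rfl
  · rintro ⟨i, g⟩ - ⟨j, h⟩ - hij
    obtain ⟨hi, hgh⟩ := Prod.mk.inj hij
    exact Prod.ext hi (List.ofFn_injective hgh)

theorem length_of_mem_sphereW {d m : ℕ} {v : Vertex d} (hv : v ∈ sphereW d (m + 1)) :
    v.2.length = m := by
  obtain ⟨x, -, rfl⟩ := Finset.mem_image.1 hv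
  simp

theorem sum_sphereW_one (d m : ℕ) :
    ∑ _v ∈ sphereW d (m + 1), (1 : ℝ) = ((d : ℝ) + 1) * (d : ℝ) ^ m := by
  rw [sum_sphereW]
  simp

theorem heightAt_concat {d : ℕ} {Ω : Type*} (Y : Vertex d → Ω → ℝ) (i : Fin (d + 1))
    (l : List (Fin d)) (a : Fin d) (ω : Ω) :
    heightAt Y (i, l ++ [a]) ω = heightAt Y (i, l) ω + Y (i, l ++ [a]) ω := by
  unfold heightAt
  simp only [List.length_append, List.length_singleton]
  rw [Finset.sum_range_succ]
  congr 1
  · refine Finset.sum_congr rfl fun k hk => ?_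
    rw [List.take_append_of_le_length (Nat.lt_succ_iff.1 (Finset.mem_range.1 hk))]
  · rw [List.take_of_length_le (by simp)]

theorem sum_heightAt_sphereW_succ {d : ℕ} {Ω : Type*} (Y : Vertex d → Ω → ℝ) (m : ℕ) (ω : Ω) :
    ∑ v ∈ sphereW d (m + 2), heightAt Y v ω =
      d * ∑ v ∈ sphereW d (m + 1), heightAt Y v ω + ∑ v ∈ sphereW d (m + 2), Y v ω := by
  rw [sum_sphereW, sum_sphereW, sum_sphereW, Finset.mul_sum, ← Finset.sum_add_distrib]
  refine Finset.sum_congr rfl fun i _ => ?_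
  have snoc_eq (x : Fin d × (Fin m → Fin d)) :
      List.ofFn (Fin.snocEquiv (fun _ => Fin d) x) = List.ofFn x.2 ++ [x.1] := by
    rw [List.ofFn_succ_last]
    simp [Fin.snocEquiv]
  rw [← (Fin.snocEquiv fun _ : Fin (m + 1) => Fin d).sum_comp,
    ← (Fin.snocEquiv fun _ : Fin (m + 1) => Fin d).sum_comp]
  simp only [snoc_eq, heightAt_concat, Finset.sum_add_distrib]
  congr 1
  rw [Fintype.sum_prod_type]
  simp

/-- The weight `1 / |W_r|` of an increment at a vertex of depth `r` in the spherical averages. -/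
def sphereWeight {d : ℕ} (v : Vertex d) : ℝ := (((d : ℝ) + 1) * (d : ℝ) ^ v.2.length)⁻¹

/-- The non-root vertices of depth at most `r`. -/
def ballW (d r : ℕ) : Finset (Vertex d) := (Finset.range r).biUnion fun k => sphereW d (k + 1)

theorem sum_ballW {d : ℕ} (r : ℕ) (f : Vertex d → ℝ) :
    ∑ v ∈ ballW d r, f v = ∑ k ∈ Finset.range r, ∑ v ∈ sphereW d (k + 1), f v := by
  refine Finset.sum_biUnion fun j _ k _ hjk => ?_
  refine Finset.disjoint_left.2 fun v hj hk => hjk ?_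
  rw [← length_of_mem_sphereW hj, length_of_mem_sphereW hk]

theorem sphAvg_eq_sum_ballW {d : ℕ} (hd : 0 < d) {Ω : Type*} (Y : Vertex d → Ω → ℝ) (m : ℕ)
    (ω : Ω) :
    sphAvg d Y (m + 1) ω = ∑ v ∈ ballW d (m + 1), sphereWeight v * Y v ω := by
  have hd' : (d : ℝ) ≠ 0 := by positivity
  have sum_weight (k : ℕ) : ∑ v ∈ sphereW d (k + 1), sphereWeight v * Y v ω =
      (((d : ℝ) + 1) * (d : ℝ) ^ k)⁻¹ * ∑ v ∈ sphereW d (k + 1), Y v ω := by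
    rw [Finset.mul_sum]
    refine Finset.sum_congr rfl fun v hv => ?_
    rw [sphereWeight, length_of_mem_sphereW hv]
  rw [sum_ballW]
  induction m with
  | zero =>
    rw [Finset.sum_range_one, sum_weight, sphAvg, sum_sphereW, sum_sphereW]
    simp [heightAt]
  | succ m ih =>
    rw [Finset.sum_range_succ, ← ih, sum_weight, sphAvg, sphAvg, sum_heightAt_sphereW_succ]
    have hd1 : (d : ℝ) + 1 ≠ 0 := by positivity
    simp only [Nat.add_sub_cancel]
    push_cast
    field_simp
    ring

theorem sum_sphereWeight_sq_le {d : ℕ} (hd : 2 ≤ d) (r : ℕ) :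
    ∑ v ∈ ballW d r, sphereWeight v ^ 2 ≤ 2 := by
  have hd' : (2 : ℝ) ≤ d := by exact_mod_cast hd
  have sum_sq (k : ℕ) : ∑ v ∈ sphereW d (k + 1), sphereWeight v ^ 2 =
      (((d : ℝ) + 1) * (d : ℝ) ^ k)⁻¹ := by
    calc ∑ v ∈ sphereW d (k + 1), sphereWeight v ^ 2
        = ∑ _v ∈ sphereW d (k + 1), (1 : ℝ) * ((((d : ℝ) + 1) * (d : ℝ) ^ k)⁻¹) ^ 2 := by
          refine Finset.sum_congr rfl fun v hv => ?_
          rw [sphereWeight, length_of_mem_sphereW hv, one_mul]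
      _ = _ := by
          rw [← Finset.sum_mul, sum_sphereW_one]
          field_simp
  rw [sum_ballW]
  calc ∑ k ∈ Finset.range r, ∑ v ∈ sphereW d (k + 1), sphereWeight v ^ 2
      ≤ ∑ k ∈ Finset.range r, (1 / 2 : ℝ) ^ k := by
        refine Finset.sum_le_sum fun k _ => ?_
        rw [sum_sq, one_div, inv_pow]
        refine inv_anti₀ (by positivity) ?_
        calc (2 : ℝ) ^ k ≤ (d : ℝ) ^ k := by gcongr
          _ ≤ ((d : ℝ) + 1) * (d : ℝ) ^ k := le_mul_of_one_le_left (by positivity) (by linarith)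
    _ ≤ 2 := sum_geometric_two_le r

theorem sphereWeight_nonneg {d : ℕ} (v : Vertex d) : 0 ≤ sphereWeight v := by
  unfold sphereWeight
  positivity

theorem sphereWeight_le {d : ℕ} (hd : 1 ≤ d) (v : Vertex d) :
    sphereWeight v ≤ ((d : ℝ) + 1)⁻¹ := by
  have hd' : (1 : ℝ) ≤ d := by exact_mod_cast hd
  exact inv_anti₀ (by positivity)
    (le_mul_of_one_le_right (by positivity) (one_le_pow₀ hd'))

theorem cosh_mul_sub_one_le {c : ℝ} (hc : |c| ≤ 1) (x : ℝ) :
    Real.cosh (c * x) - 1 ≤ c ^ 2 * (Real.cosh x - 1) := by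
  have hc2 : c ^ 2 ≤ 1 := (sq_le_one_iff_abs_le_one c).2 hc
  have shifted (y : ℝ) : HasSum (fun n : ℕ => y ^ (2 * (n + 1)) / ((2 * (n + 1)).factorial : ℝ))
      (Real.cosh y - 1) := by
    simpa using (hasSum_nat_add_iff' 1).2 (Real.hasSum_cosh y)
  refine hasSum_le (fun n => ?_) (shifted (c * x)) ((shifted x).mul_left (c ^ 2))
  rw [← mul_div_assoc]
  gcongr
  rw [mul_pow, pow_mul c]
  refine mul_le_mul_of_nonneg_right ?_ (by rw [pow_mul]; positivity)
  exact pow_le_of_le_one (sq_nonneg c) hc2 (Nat.succ_ne_zero n)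

/-- Near zero, the moment generating function of a symmetric law is dominated by a Gaussian one. -/
theorem tsum_exp_mul_le_exp_sq {p : ℤ → ℝ} (hp0 : ∀ j, 0 ≤ p j) (hpsum : HasSum p 1)
    (hsymm : ∀ j, p (-j) = p j) {R : ℝ}
    (hψ : ∀ s : ℝ, |s| < R → Summable (fun j : ℤ => Real.exp (s * j) * p j))
    {a : ℝ} (ha : 0 < a) (haR : a < R) :
    ∃ C : ℝ, 0 ≤ C ∧ ∀ s : ℝ, |s| ≤ a →
      ∑' j : ℤ, Real.exp (s * j) * p j ≤ Real.exp (C * s ^ 2) := by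
  have hasSum_cosh (s : ℝ) (hs : |s| < R) : HasSum (fun j : ℤ => Real.cosh (s * j) * p j)
      (∑' j : ℤ, Real.exp (s * j) * p j) := by
    have hpos := (hψ s hs).hasSum
    have hneg := (Equiv.neg ℤ).hasSum_iff.2 hpos
    convert! (hpos.add hneg).div_const 2 using 1
    · ext j
      simp only [Function.comp_apply, Equiv.neg_apply, hsymm, Real.cosh_eq]
      push_cast
      rw [mul_neg]
      ring
    · ring
  have hasSum_sub (s : ℝ) (hs : |s| < R) :
      HasSum (fun j : ℤ => (Real.cosh (s * j) - 1) * p j)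
        (∑' j : ℤ, Real.exp (s * j) * p j - 1) := by
    simpa only [sub_mul, one_mul] using (hasSum_cosh s hs).sub hpsum
  have ha_sum := hasSum_sub a (by rwa [abs_of_pos ha])
  have ha_nonneg := ha_sum.nonneg fun j =>
    mul_nonneg (sub_nonneg.2 (Real.one_le_cosh _)) (hp0 j)
  refine ⟨(∑' j : ℤ, Real.exp (a * j) * p j - 1) / a ^ 2, by positivity, fun s hs => ?_⟩
  have hle := hasSum_le (fun j : ℤ => ?_) (hasSum_sub s (hs.trans_lt haR))
    (ha_sum.mul_left ((s / a) ^ 2))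
  · refine le_trans ?_ (Real.add_one_le_exp _)
    have : (s / a) ^ 2 * (∑' j : ℤ, Real.exp (a * j) * p j - 1) =
        (∑' j : ℤ, Real.exp (a * j) * p j - 1) / a ^ 2 * s ^ 2 := by
      field_simp
    linarith
  · have hsa : |s / a| ≤ 1 := by
      rw [abs_div, abs_of_pos ha]
      exact div_le_one_of_le₀ hs ha.le
    have := cosh_mul_sub_one_le hsa (a * j)
    rw [← mul_assoc, div_mul_cancel₀ s ha.ne'] at this
    rw [← mul_assoc]
    exact mul_le_mul_of_nonneg_right this (hp0 j)

theorem lintegral_exp_mul_eq {Ω : Type*} [MeasurableSpace Ω] {P : Measure Ω} {X : Ω → ℤ}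
    (hX : Measurable X) {p : ℤ → ℝ} (hp0 : ∀ j, 0 ≤ p j)
    (hlaw : ∀ j : ℤ, P {ω | X ω = j} = ENNReal.ofReal (p j)) {s : ℝ}
    (hs : Summable (fun j : ℤ => Real.exp (s * j) * p j)) :
    ∫⁻ ω, ENNReal.ofReal (Real.exp (s * X ω)) ∂P =
      ENNReal.ofReal (∑' j : ℤ, Real.exp (s * j) * p j) := by
  rw [← lintegral_map (f := fun j : ℤ => ENNReal.ofReal (Real.exp (s * j)))
    (measurable_of_countable _) hX, lintegral_countable',
    ENNReal.ofReal_tsum_of_nonneg (fun j => mul_nonneg (Real.exp_nonneg _) (hp0 j)) hs]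
  refine tsum_congr fun j => ?_
  rw [Measure.map_apply hX (measurableSet_singleton j), ENNReal.ofReal_mul (Real.exp_nonneg _),
    ← hlaw j]
  rfl

theorem measure_ge_le_of_lintegral_exp_le {Ω : Type*} [MeasurableSpace Ω] {P : Measure Ω}
    {X : Ω → ℝ} (hX : Measurable X) {A M : ℝ} (hA : 0 ≤ A)
    (h : ∫⁻ ω, ENNReal.ofReal (Real.exp (A * X ω)) ∂P ≤ ENNReal.ofReal M) (s : ℝ) :
    P {ω | s ≤ X ω} ≤ ENNReal.ofReal (M * Real.exp (-A * s)) := by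
  have hmarkov := (mul_meas_ge_le_lintegral (μ := P)
    (f := fun ω => ENNReal.ofReal (Real.exp (A * X ω))) (by fun_prop)
    (ENNReal.ofReal (Real.exp (A * s)))).trans h
  have hpos : ENNReal.ofReal (Real.exp (A * s)) ≠ 0 := by
    simpa using Real.exp_pos (A * s)
  calc P {ω | s ≤ X ω}
      ≤ P {ω | ENNReal.ofReal (Real.exp (A * s)) ≤ ENNReal.ofReal (Real.exp (A * X ω))} := by
        refine measure_mono fun ω (hω : s ≤ X ω) => ENNReal.ofReal_le_ofReal ?_
        gcongr
    _ ≤ ENNReal.ofReal M / ENNReal.ofReal (Real.exp (A * s)) := by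
        rw [ENNReal.le_div_iff_mul_le (Or.inl hpos) (Or.inl ENNReal.ofReal_ne_top), mul_comm]
        exact hmarkov
    _ = ENNReal.ofReal (M * Real.exp (-A * s)) := by
        rw [← ENNReal.ofReal_div_of_pos (Real.exp_pos _), neg_mul, Real.exp_neg, div_eq_mul_inv]

theorem lintegral_exp_mul_sphAvg_le {Ω : Type*} [MeasurableSpace Ω] {P : Measure Ω} {d : ℕ}
    (hd : 2 ≤ d) {Y : Vertex d → Ω → ℤ} (hmeas : ∀ v, Measurable (Y v))
    (hindep : iIndepFun Y P) {a C : ℝ} (hC : 0 ≤ C)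
    (hgauss : ∀ v (s : ℝ), |s| ≤ a →
      ∫⁻ ω, ENNReal.ofReal (Real.exp (s * Y v ω)) ∂P ≤ ENNReal.ofReal (Real.exp (C * s ^ 2)))
    {t : ℝ} (ht : |t| ≤ ((d : ℝ) + 1) * a) (m : ℕ) :
    ∫⁻ ω, ENNReal.ofReal (Real.exp (t * sphAvg d (fun v ω => (Y v ω : ℝ)) (m + 1) ω)) ∂P ≤
      ENNReal.ofReal (Real.exp (2 * C * t ^ 2)) := by
  have factor (ω : Ω) :
      ENNReal.ofReal (Real.exp (t * sphAvg d (fun v ω => (Y v ω : ℝ)) (m + 1) ω)) =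
        ∏ v ∈ ballW d (m + 1), ENNReal.ofReal (Real.exp (t * sphereWeight v * Y v ω)) := by
    rw [sphAvg_eq_sum_ballW (by lia), Finset.mul_sum, Real.exp_sum,
      ENNReal.ofReal_prod_of_nonneg fun v _ => Real.exp_nonneg _]
    simp only [mul_assoc]
  simp only [factor]
  rw [lintegral_prod_eq_prod_lintegral_of_indepFun (ballW d (m + 1))
    (fun v ω => ENNReal.ofReal (Real.exp (t * sphereWeight v * Y v ω)))
    (hindep.comp (fun v (j : ℤ) => ENNReal.ofReal (Real.exp (t * sphereWeight v * j)))
      fun v => measurable_of_countable _)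
    (fun v => (measurable_of_countable
      fun j : ℤ => ENNReal.ofReal (Real.exp (t * sphereWeight v * j))).comp (hmeas v))]
  have abs_le (v : Vertex d) : |t * sphereWeight v| ≤ a := by
    rw [abs_mul, abs_of_nonneg (sphereWeight_nonneg v)]
    calc |t| * sphereWeight v ≤ |t| * ((d : ℝ) + 1)⁻¹ := by
          gcongr
          exact sphereWeight_le (by lia) v
      _ ≤ a := by
          rw [← div_eq_mul_inv, div_le_iff₀ (by positivity)]
          linarith
  calc ∏ v ∈ ballW d (m + 1), ∫⁻ ω, ENNReal.ofReal (Real.exp (t * sphereWeight v * Y v ω)) ∂P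
      ≤ ∏ v ∈ ballW d (m + 1), ENNReal.ofReal (Real.exp (C * (t * sphereWeight v) ^ 2)) :=
        Finset.prod_le_prod' fun v _ => hgauss v _ (abs_le v)
    _ = ENNReal.ofReal (Real.exp (C * t ^ 2 * ∑ v ∈ ballW d (m + 1), sphereWeight v ^ 2)) := by
        rw [← ENNReal.ofReal_prod_of_nonneg fun v _ => Real.exp_nonneg _, ← Real.exp_sum,
          Finset.mul_sum]
        simp only [mul_pow, mul_assoc]
    _ ≤ ENNReal.ofReal (Real.exp (2 * C * t ^ 2)) := by
        refine ENNReal.ofReal_le_ofReal (Real.exp_le_exp.2 ?_)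
        calc C * t ^ 2 * ∑ v ∈ ballW d (m + 1), sphereWeight v ^ 2 ≤ C * t ^ 2 * 2 := by
              gcongr
              exact sum_sphereWeight_sq_le hd _
          _ = 2 * C * t ^ 2 := by ring

theorem lintegral_exp_mul_le_of_tendsto {Ω : Type*} [MeasurableSpace Ω] {P : Measure Ω}
    {X : ℕ → Ω → ℝ} (hX : ∀ n, Measurable (X n)) {H : Ω → ℝ}
    (hH : ∀ᵐ ω ∂P, Tendsto (fun n => X n ω) atTop (𝓝 (H ω))) {t : ℝ} {M : ENNReal}
    (hM : ∀ n, ∫⁻ ω, ENNReal.ofReal (Real.exp (t * X n ω)) ∂P ≤ M) :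
    ∫⁻ ω, ENNReal.ofReal (Real.exp (t * H ω)) ∂P ≤ M := by
  calc ∫⁻ ω, ENNReal.ofReal (Real.exp (t * H ω)) ∂P
      = ∫⁻ ω, liminf (fun n => ENNReal.ofReal (Real.exp (t * X n ω))) atTop ∂P := by
        refine lintegral_congr_ae ?_
        filter_upwards [hH] with ω hω
        refine (Tendsto.liminf_eq ?_).symm
        exact ENNReal.tendsto_ofReal
          ((Real.continuous_exp.tendsto _).comp (hω.const_mul t))
    _ ≤ liminf (fun n => ∫⁻ ω, ENNReal.ofReal (Real.exp (t * X n ω)) ∂P) atTop :=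
        lintegral_liminf_le fun n => by fun_prop
    _ ≤ M := liminf_le_of_le (by isBoundedDefault) fun b hb =>
        let ⟨n, hn⟩ := hb.exists
        hn.trans (hM n)

theorem measurable_sphAvg {Ω : Type*} [MeasurableSpace Ω] {d : ℕ} {Y : Vertex d → Ω → ℝ}
    (hY : ∀ v, Measurable (Y v)) (r : ℕ) : Measurable (sphAvg d Y r) := by
  unfold sphAvg heightAt
  fun_prop

/-- Exponential tail bound for the a.s. limit `H` of the spherical averages
of the free height field: for every `0 < A < (d+1)R` there is `B < ∞` with
`P(|H| ≥ s) ≤ B e^{-As}` for all `s ≥ 0`. -/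
theorem free_limit_exponential_tail
    {Ω : Type} [MeasurableSpace Ω] (P : Measure Ω) [IsProbabilityMeasure P]
    (d : ℕ) (hd : 2 ≤ d)
    (p : ℤ → ℝ) (hp0 : ∀ j, 0 ≤ p j) (hpsum : Summable p) (hp1 : ∑' j, p j = 1)
    (hsymm : ∀ j, p (-j) = p j)
    (R : ℝ) (hR : 0 < R)
    (hψ : ∀ s : ℝ, |s| < R → Summable (fun j : ℤ => Real.exp (s * j) * p j))
    (Y : Vertex d → Ω → ℤ) (hmeas : ∀ v, Measurable (Y v))
    (hindep : iIndepFun Y P)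
    (hlaw : ∀ v (j : ℤ), P {ω | Y v ω = j} = ENNReal.ofReal (p j))
    (H : Ω → ℝ) (hHmeas : Measurable H)
    (hH : ∀ᵐ ω ∂P, Tendsto (fun r => sphAvg d (fun v ω => (Y v ω : ℝ)) r ω) atTop (𝓝 (H ω))) :
    ∀ A : ℝ, 0 < A → A < ((d : ℝ) + 1) * R →
      ∃ B : ℝ, 0 ≤ B ∧ ∀ s : ℝ, 0 ≤ s →
        P {ω | s ≤ |H ω|} ≤ ENNReal.ofReal (B * Real.exp (-A * s)) := by
  intro A hA hAR
  have hd1 : (0 : ℝ) < (d : ℝ) + 1 := by positivity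
  have haR : A / ((d : ℝ) + 1) < R := by
    rw [div_lt_iff₀ hd1]
    linarith
  obtain ⟨C, hC, hgauss⟩ := tsum_exp_mul_le_exp_sq hp0 (hp1 ▸ hpsum.hasSum) hsymm hψ
    (div_pos hA hd1) haR
  have hbound (t : ℝ) (ht : |t| = A) :
      ∫⁻ ω, ENNReal.ofReal (Real.exp (t * H ω)) ∂P ≤
        ENNReal.ofReal (Real.exp (2 * C * A ^ 2)) := by
    refine lintegral_exp_mul_le_of_tendsto
      (X := fun m => sphAvg d (fun v ω => (Y v ω : ℝ)) (m + 1))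
      (fun m => measurable_sphAvg
        (fun v => (measurable_of_countable fun j : ℤ => (j : ℝ)).comp (hmeas v)) _)
      (hH.mono fun ω hω => hω.comp (tendsto_add_atTop_nat 1)) fun m => ?_
    rw [← ht, sq_abs]
    refine lintegral_exp_mul_sphAvg_le hd hmeas hindep hC (fun v s hs => ?_)
      (by rw [mul_div_cancel₀ A hd1.ne', ht]) m
    rw [lintegral_exp_mul_eq (hmeas v) hp0 (hlaw v) (hψ s (hs.trans_lt haR))]
    exact ENNReal.ofReal_le_ofReal (hgauss s hs)
  have hpos := measure_ge_le_of_lintegral_exp_le hHmeas hA.le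
    (hbound A (abs_of_pos hA))
  have hneg := measure_ge_le_of_lintegral_exp_le hHmeas.neg hA.le
    (by simpa using hbound (-A) (by rw [abs_neg, abs_of_pos hA]))
  refine ⟨2 * Real.exp (2 * C * A ^ 2), by positivity, fun s _ => ?_⟩
  calc P {ω | s ≤ |H ω|}
      ≤ P ({ω | s ≤ H ω} ∪ {ω | s ≤ (-H) ω}) :=
        measure_mono fun ω (hω : s ≤ |H ω|) => (le_abs.1 hω : s ≤ H ω ∨ s ≤ -H ω)
    _ ≤ P {ω | s ≤ H ω} + P {ω | s ≤ (-H) ω} := measure_union_le _ _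
    _ ≤ _ := add_le_add (hpos s) (hneg s)
    _ = ENNReal.ofReal (2 * Real.exp (2 * C * A ^ 2) * Real.exp (-A * s)) := by
        rw [← ENNReal.ofReal_add (by positivity) (by positivity)]
        ring_nf
end
end

section
/- Let d ≥ 2 and let p be a symmetric probability mass function on ℤ with 0 < Σ_{j∈ℤ} j² p(j) < ∞. Let H be the almost-sure limit of the spherical averages H_r of the free height field with increment law p on the rooted Cayley tree of order d. Then there exists a constant c > 0 such that for all t ∈ ℝ the characteristic function of H satisfies |E[exp(itH)]| ≤ exp( −c · min(t², |t|) ). -/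
open MeasureTheory ProbabilityTheory Filter Finset Topology

noncomputable section

lemma sum_sphereW_succ {d : ℕ} {M : Type*} [AddCommMonoid M] (n : ℕ) (f : Vertex d → M) :
    ∑ v ∈ sphereW d (n + 1), f v =
      ∑ x : Fin (d + 1) × (Fin n → Fin d), f (x.1, List.ofFn x.2) := by
  unfold sphereW
  rw [Finset.sum_image]
  · rfl
  · rintro ⟨a, g⟩ - ⟨b, h⟩ - hab
    simp only [Prod.mk.injEq] at hab
    rw [hab.1, List.ofFn_injective hab.2]

lemma card_sphereW_succ (d n : ℕ) : (sphereW d (n + 1)).card = (d + 1) * d ^ n := by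
  rw [Finset.card_eq_sum_ones, sum_sphereW_succ]
  simp

lemma length_of_mem_sphereW_succ {d n : ℕ} {v : Vertex d} (hv : v ∈ sphereW d (n + 1)) :
    v.2.length = n := by
  simp only [sphereW, Finset.mem_image] at hv
  obtain ⟨x, -, rfl⟩ := hv
  simp

lemma sum_sphereW_succ_succ {d : ℕ} {M : Type*} [AddCommMonoid M] (n : ℕ) (f : Vertex d → M) :
    ∑ v ∈ sphereW d (n + 2), f v =
      ∑ v ∈ sphereW d (n + 1), ∑ x : Fin d, f (v.1, v.2 ++ [x]) := by
  rw [sum_sphereW_succ, sum_sphereW_succ, Fintype.sum_prod_type, Fintype.sum_prod_type]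
  refine Finset.sum_congr rfl fun i _ => ?_
  rw [← (Fin.snocEquiv fun _ : Fin (n + 1) => Fin d).sum_comp, Fintype.sum_prod_type,
    Finset.sum_comm]
  refine Finset.sum_congr rfl fun g _ => Finset.sum_congr rfl fun x _ => ?_
  simp [Fin.snocEquiv, List.ofFn_succ_last, -List.ofFn_succ]

lemma heightAt_append_singleton {d : ℕ} {Ω : Type*} (Y : Vertex d → Ω → ℝ) (i : Fin (d + 1))
    (l : List (Fin d)) (x : Fin d) (ω : Ω) :
    heightAt Y (i, l ++ [x]) ω = heightAt Y (i, l) ω + Y (i, l ++ [x]) ω := by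
  unfold heightAt
  simp only [List.length_append, List.length_singleton]
  rw [Finset.sum_range_succ]
  congr 1
  · refine Finset.sum_congr rfl fun k hk => ?_
    rw [List.take_append_of_le_length (Nat.lt_succ_iff.1 (Finset.mem_range.1 hk))]
  · rw [List.take_of_length_le (by simp)]

/-- The spherical average is a sum of the averages of the increments over the spheres. -/
lemma sphAvg_succ_eq_sum {d : ℕ} (hd : 0 < d) {Ω : Type*} (Y : Vertex d → Ω → ℝ) (n : ℕ) (ω : Ω) :
    sphAvg d Y (n + 1) ω = ∑ k ∈ Finset.range (n + 1), ∑ v ∈ sphereW d (k + 1),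
      (((d + 1) * d ^ k : ℕ) : ℝ)⁻¹ * Y v ω := by
  induction n with
  | zero =>
    simp only [sphAvg, zero_add, Finset.sum_range_one, Finset.mul_sum]
    refine Finset.sum_congr rfl fun v hv => ?_
    have hl : v.2 = [] := List.length_eq_zero_iff.1 (length_of_mem_sphereW_succ (n := 0) hv)
    obtain ⟨i, l⟩ := v
    simp only at hl
    simp [heightAt, hl]
  | succ n ih =>
    rw [Finset.sum_range_succ, ← ih]
    simp only [sphAvg, ← Finset.mul_sum, Nat.add_sub_cancel]
    rw [sum_sphereW_succ_succ, sum_sphereW_succ_succ]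
    simp only [heightAt_append_singleton, Finset.sum_add_distrib, mul_add]
    congr 1
    have hd' : (d : ℝ) ≠ 0 := by positivity
    simp only [Finset.sum_const, Finset.card_univ, Fintype.card_fin, nsmul_eq_mul,
      ← Finset.mul_sum]
    push_cast
    field_simp
    ring

lemma pairwiseDisjoint_sphereW_succ (d : ℕ) (s : Set ℕ) :
    s.PairwiseDisjoint fun k => sphereW d (k + 1) := by
  intro a _ b _ hab
  refine Finset.disjoint_left.2 fun v ha hb => hab ?_
  rw [← length_of_mem_sphereW_succ ha, ← length_of_mem_sphereW_succ hb]

/-- The spherical average has a characteristic function dominated by the contribution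
of any single sphere. -/
lemma norm_charFun_sphAvg_le {Ω : Type*} [MeasurableSpace Ω] (P : Measure Ω)
    [IsProbabilityMeasure P] {d : ℕ} (hd : 0 < d) (Y : Vertex d → Ω → ℝ)
    (hY : ∀ v, Measurable (Y v)) (hindep : iIndepFun Y P) (φ : ℝ → ℂ)
    (hφ : ∀ v, charFun (P.map (Y v)) = φ) {k n : ℕ} (hkn : k ≤ n) (t : ℝ) :
    ‖charFun (P.map (sphAvg d Y (n + 1))) t‖ ≤
      ‖φ ((((d + 1) * d ^ k : ℕ) : ℝ)⁻¹ * t)‖ ^ ((d + 1) * d ^ k) := by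
  have hφ1 : ∀ s, ‖φ s‖ ≤ 1 := fun s => by
    have := Measure.isProbabilityMeasure_map (μ := P) (hY (0, [])).aemeasurable
    rw [← hφ (0, [])]
    exact norm_charFun_le_one s
  let X : Vertex d → Ω → ℝ := fun v ω => (((d + 1) * d ^ v.2.length : ℕ) : ℝ)⁻¹ * Y v ω
  have hX : ∀ v, Measurable (X v) := fun v => (hY v).const_mul _
  have hXind : iIndepFun X P :=
    hindep.comp (fun v y => (((d + 1) * d ^ v.2.length : ℕ) : ℝ)⁻¹ * y)
      fun v => measurable_const_mul _
  have hsum : sphAvg d Y (n + 1) =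
      ∑ v ∈ (Finset.range (n + 1)).biUnion (fun k => sphereW d (k + 1)), X v := by
    ext ω
    rw [Finset.sum_apply, Finset.sum_biUnion (pairwiseDisjoint_sphereW_succ d _),
      sphAvg_succ_eq_sum hd]
    refine Finset.sum_congr rfl fun k _ => Finset.sum_congr rfl fun v hv => ?_
    simp only [X, length_of_mem_sphereW_succ hv]
  have hcf : ∀ v, charFun (P.map (X v)) t = φ ((((d + 1) * d ^ v.2.length : ℕ) : ℝ)⁻¹ * t) :=
    fun v => by rw [← hφ v]; exact charFun_map_mul_comp (hY v).aemeasurable _ _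
  rw [hsum, iIndepFun.charFun_map_finsetSum_eq_prod (fun v _ => (hX v).aemeasurable)
    (hXind.restrict _), Finset.prod_apply, norm_prod,
    Finset.prod_biUnion (pairwiseDisjoint_sphereW_succ d _),
    ← Finset.mul_prod_erase _ _ (Finset.mem_range.2 (Nat.lt_succ_of_le hkn))]
  have hle : ∀ v, ‖charFun (P.map (X v)) t‖ ≤ 1 := fun v => by rw [hcf]; exact hφ1 _
  refine (mul_le_of_le_one_right (Finset.prod_nonneg fun _ _ => norm_nonneg _)
    (Finset.prod_le_one (fun _ _ => Finset.prod_nonneg fun _ _ => norm_nonneg _)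
      fun _ _ => Finset.prod_le_one (fun _ _ => norm_nonneg _) fun v _ => hle v)).trans_eq ?_
  rw [← card_sphereW_succ, ← Finset.prod_const]
  refine Finset.prod_congr rfl fun v hv => ?_
  rw [hcf, length_of_mem_sphereW_succ hv, card_sphereW_succ]

/-- The characteristic function of an integer-valued random variable. -/
lemma charFun_map_intCast_eq_tsum {Ω : Type*} [MeasurableSpace Ω] (P : Measure Ω)
    [IsProbabilityMeasure P] {p : ℤ → ℝ} (hp0 : ∀ j, 0 ≤ p j) {X : Ω → ℤ} (hX : Measurable X)
    (hlaw : ∀ j, P {ω | X ω = j} = ENNReal.ofReal (p j)) (s : ℝ) :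
    charFun (P.map fun ω => (X ω : ℝ)) s =
      ∑' j : ℤ, (p j : ℂ) * Complex.exp ((s * j : ℝ) * Complex.I) := by
  have := Measure.isProbabilityMeasure_map (μ := P) hX.aemeasurable
  have hm : P.map (fun ω => (X ω : ℝ)) = (P.map X).map (fun j : ℤ => (j : ℝ)) := by
    rw [Measure.map_map (by fun_prop) hX]; rfl
  rw [hm, charFun_apply_real, integral_map (by fun_prop) (by fun_prop), integral_countable]
  · refine tsum_congr fun j => ?_
    have : (P.map X).real {j} = p j := by
      rw [measureReal_def, Measure.map_apply hX (measurableSet_singleton j)]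
      change (P {ω | X ω = j}).toReal = _
      rw [hlaw, ENNReal.toReal_ofReal (hp0 j)]
    rw [this, Complex.real_smul]
    push_cast
    rfl
  · refine Integrable.of_bound (C := 1) (by fun_prop) (ae_of_all _ fun j => ?_)
    have h := Complex.norm_exp_ofReal_mul_I (s * j)
    push_cast at h
    exact h.le

/-- For a symmetric law on the integers the characteristic function is a cosine series. -/
lemma tsum_mul_exp_eq_tsum_mul_cos {p : ℤ → ℝ} (hp0 : ∀ j, 0 ≤ p j) (hpsum : Summable p)
    (hsymm : ∀ j, p (-j) = p j) (s : ℝ) :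
    ∑' j : ℤ, (p j : ℂ) * Complex.exp ((s * j : ℝ) * Complex.I) =
      ((∑' j : ℤ, p j * Real.cos (s * j) : ℝ) : ℂ) := by
  have hbd : ∀ j : ℤ, ‖(p j : ℂ) * Complex.exp ((s * j : ℝ) * Complex.I)‖ ≤ p j := fun j => by
    rw [norm_mul, Complex.norm_exp_ofReal_mul_I, mul_one, Complex.norm_real,
      Real.norm_of_nonneg (hp0 j)]
  have hS : Summable fun j : ℤ => (p j : ℂ) * Complex.exp ((s * j : ℝ) * Complex.I) :=
    Summable.of_norm_bounded hpsum hbd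
  apply Complex.ext
  · rw [Complex.re_tsum hS, Complex.ofReal_re]
    refine tsum_congr fun j => ?_
    rw [Complex.re_ofReal_mul, Complex.exp_ofReal_mul_I_re]
  · rw [Complex.im_tsum hS, Complex.ofReal_im]
    have h : ∀ j : ℤ, ((p j : ℂ) * Complex.exp ((s * j : ℝ) * Complex.I)).im =
        p j * Real.sin (s * j) := fun j => by
      rw [Complex.im_ofReal_mul, Complex.exp_ofReal_mul_I_im]
    simp only [h]
    have hneg : ∑' j : ℤ, p j * Real.sin (s * j) = -∑' j : ℤ, p j * Real.sin (s * j) := by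
      conv_lhs => rw [← (Equiv.neg ℤ).tsum_eq]
      rw [← tsum_neg]
      refine tsum_congr fun j => ?_
      simp [hsymm]
    linarith

/-- Gaussian decay near the origin of the characteristic function of a symmetric
nondegenerate square-integrable law on the integers. -/
lemma exists_abs_tsum_mul_cos_le {p : ℤ → ℝ} (hp0 : ∀ j, 0 ≤ p j) (hpsum : Summable p)
    (hp1 : ∑' j, p j = 1) (hmom : Summable (fun j : ℤ => (j : ℝ) ^ 2 * p j))
    (hmompos : 0 < ∑' j : ℤ, (j : ℝ) ^ 2 * p j) :
    ∃ a δ : ℝ, 0 < a ∧ 0 < δ ∧ ∀ s : ℝ, |s| ≤ δ →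
      |∑' j : ℤ, p j * Real.cos (s * j)| ≤ Real.exp (-a * s ^ 2) := by
  set M := ∑' j : ℤ, (j : ℝ) ^ 2 * p j with hM
  obtain ⟨i, hi⟩ : ∃ i : ℤ, (i : ℝ) ^ 2 * p i ≠ 0 := by
    by_contra! h
    simp [hM, h] at hmompos
  have hi0 : (i : ℝ) ≠ 0 := fun h => hi (by simp [h])
  have hpi : 0 < p i := (hp0 i).lt_of_ne' fun h => hi (by simp [h])
  have hpi' := Real.pi_pos
  refine ⟨p i * (2 / Real.pi ^ 2 * (i : ℝ) ^ 2), min (Real.pi / |(i : ℝ)|) (Real.sqrt (2 / M)),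
    by positivity, by positivity, fun s hs => ?_⟩
  have hs1 : |s * i| ≤ Real.pi := by
    rw [abs_mul]
    exact (le_div_iff₀ (abs_pos.2 hi0)).1 (hs.trans (min_le_left _ _))
  have hs2 : s ^ 2 * M ≤ 2 := by
    rw [← le_div_iff₀ hmompos, ← sq_abs]
    exact (Real.le_sqrt (abs_nonneg s) (by positivity)).1 (hs.trans (min_le_right _ _))
  have hC : Summable fun j : ℤ => p j * Real.cos (s * j) := by
    refine Summable.of_norm_bounded hpsum fun j => ?_
    rw [norm_mul, Real.norm_of_nonneg (hp0 j)]
    exact mul_le_of_le_one_right (hp0 j) (Real.abs_cos_le_one _)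
  have hnonneg : 0 ≤ ∑' j : ℤ, p j * Real.cos (s * j) := by
    have h := (hpsum.sub (hmom.mul_left (s ^ 2 / 2))).tsum_le_tsum
      (fun j => show p j - s ^ 2 / 2 * ((j : ℝ) ^ 2 * p j) ≤ p j * Real.cos (s * j) by
        have := mul_le_mul_of_nonneg_left
          (Real.one_sub_sq_div_two_le_cos (x := s * j)) (hp0 j)
        linarith) hC
    rw [hpsum.tsum_sub (hmom.mul_left _), hp1, tsum_mul_left, ← hM] at h
    linarith
  have hupper : p i * (1 - Real.cos (s * i)) ≤ 1 - ∑' j : ℤ, p j * Real.cos (s * j) := by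
    have h := (hpsum.sub hC).le_tsum i fun j _ => by
      nlinarith [hp0 j, Real.cos_le_one (s * j)]
    rw [hpsum.tsum_sub hC, hp1] at h
    linarith
  rw [abs_of_nonneg hnonneg]
  have h1 := mul_le_mul_of_nonneg_left (Real.cos_le_one_sub_mul_cos_sq hs1) (hp0 i)
  have h2 := Real.add_one_le_exp (-(p i * (2 / Real.pi ^ 2 * (i : ℝ) ^ 2)) * s ^ 2)
  linarith

/-- Optimizing over a geometric sequence of scales turns Gaussian decay at each scale into
the bound `min (t ^ 2) |t|`. -/
lemma exists_scale {d : ℕ} (hd : 2 ≤ d) {a δ : ℝ} (ha : 0 < a) (hδ : 0 < δ) :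
    ∃ c : ℝ, 0 < c ∧ ∀ t : ℝ, ∃ k : ℕ, |t| ≤ δ * ((d + 1) * d ^ k : ℕ) ∧
      c * min (t ^ 2) |t| ≤ a * (t ^ 2 / ((d + 1) * d ^ k : ℕ)) := by
  have hd0 : (0 : ℝ) < d := by positivity
  have hd1 : (1 : ℝ) < d := by exact_mod_cast hd
  refine ⟨min (a / (d + 1)) (a * δ / d), by positivity, fun t => ?_⟩
  have hex : ∃ k : ℕ, |t| ≤ δ * ((d + 1) * d ^ k : ℕ) := by
    obtain ⟨k, hk⟩ := pow_unbounded_of_one_lt (|t| / δ) hd1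
    refine ⟨k, ?_⟩
    rw [div_lt_iff₀ hδ] at hk
    push_cast
    nlinarith [pow_pos hd0 k, mul_pos hδ (mul_pos hd0 (pow_pos hd0 k))]
  classical
  refine ⟨Nat.find hex, Nat.find_spec hex, ?_⟩
  rcases hk : Nat.find hex with _ | k
  · calc _ ≤ a / (d + 1) * t ^ 2 :=
          mul_le_mul (min_le_left _ _) (min_le_left _ _) (by positivity) (by positivity)
      _ = _ := by push_cast; field_simp
  · have hlt : δ * ((d + 1) * d ^ k : ℕ) < |t| :=
      not_le.1 (Nat.find_min hex (m := k) (by omega))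
    calc _ ≤ a * δ / d * |t| :=
          mul_le_mul (min_le_right _ _) (min_le_right _ _) (by positivity) (by positivity)
      _ ≤ _ := by
        rw [← sq_abs t]
        push_cast at hlt ⊢
        rw [mul_div_assoc, mul_assoc]
        refine mul_le_mul_of_nonneg_left ?_ ha.le
        rw [le_div_iff₀ (by positivity)]
        have : δ / d * |t| * ((d + 1) * d ^ (k + 1)) = |t| * (δ * ((d + 1) * d ^ k)) := by
          field_simp
          ring
        rw [this, sq]
        gcongr

/-- Exponential bound on the characteristic function of the a.s. limit `H`
of the spherical averages of the free height field:
`|E[e^{itH}]| ≤ exp(-c·min(t², |t|))` for some `c > 0`. -/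
theorem free_limit_charfun_exponential_bound
    {Ω : Type} [MeasurableSpace Ω] (P : Measure Ω) [IsProbabilityMeasure P]
    (d : ℕ) (hd : 2 ≤ d)
    (p : ℤ → ℝ) (hp0 : ∀ j, 0 ≤ p j) (hpsum : Summable p) (hp1 : ∑' j, p j = 1)
    (hsymm : ∀ j, p (-j) = p j)
    (hmom : Summable (fun j : ℤ => (j : ℝ) ^ 2 * p j))
    (hmompos : 0 < ∑' j : ℤ, (j : ℝ) ^ 2 * p j)
    (Y : Vertex d → Ω → ℤ) (hmeas : ∀ v, Measurable (Y v))
    (hindep : iIndepFun Y P)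
    (hlaw : ∀ v (j : ℤ), P {ω | Y v ω = j} = ENNReal.ofReal (p j))
    (H : Ω → ℝ) (hHmeas : Measurable H)
    (hH : ∀ᵐ ω ∂P, Tendsto (fun r => sphAvg d (fun v ω => (Y v ω : ℝ)) r ω) atTop (𝓝 (H ω))) :
    ∃ c : ℝ, 0 < c ∧ ∀ t : ℝ,
      ‖∫ ω, Complex.exp (Complex.I * t * (H ω : ℝ)) ∂P‖ ≤
        Real.exp (-c * min (t ^ 2) |t|) := by
  obtain ⟨a, δ, ha, hδ, hdecay⟩ := exists_abs_tsum_mul_cos_le hp0 hpsum hp1 hmom hmompos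
  obtain ⟨c, hc, hscale⟩ := exists_scale hd ha hδ
  refine ⟨c, hc, fun t => ?_⟩
  obtain ⟨k, hk, hck⟩ := hscale t
  set Z : Vertex d → Ω → ℝ := fun v ω => (Y v ω : ℝ)
  have hZ : ∀ v, Measurable (Z v) := fun v => Measurable.comp (by fun_prop) (hmeas v)
  have hZind : iIndepFun Z P := hindep.comp (fun _ (j : ℤ) => (j : ℝ)) fun _ => by fun_prop
  have hφ : ∀ v, charFun (P.map (Z v)) =
      fun s => ((∑' j : ℤ, p j * Real.cos (s * j) : ℝ) : ℂ) := fun v => by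
    ext s
    rw [charFun_map_intCast_eq_tsum P hp0 (hmeas v) (hlaw v),
      tsum_mul_exp_eq_tsum_mul_cos hp0 hpsum hsymm]
  have hHr : ∀ r, Measurable (sphAvg d Z r) := fun r => by
    unfold sphAvg heightAt
    fun_prop
  have hlim : Tendsto (fun n => ∫ ω, Complex.exp (Complex.I * t * (sphAvg d Z (n + 1) ω : ℝ)) ∂P)
      atTop (𝓝 (∫ ω, Complex.exp (Complex.I * t * (H ω : ℝ)) ∂P)) := by
    refine tendsto_integral_of_dominated_convergence (fun _ => 1)
      (fun n => ?_) (integrable_const _) (fun n => ae_of_all _ fun ω => ?_) ?_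
    · have := hHr (n + 1)
      exact Measurable.aestronglyMeasurable (by fun_prop)
    · have h := Complex.norm_exp_I_mul_ofReal (t * sphAvg d Z (n + 1) ω)
      push_cast at h
      rw [mul_assoc, h]
    · filter_upwards [hH] with ω hω
      have hcont : Continuous fun x : ℝ => Complex.exp (Complex.I * t * (x : ℂ)) := by fun_prop
      exact (hcont.tendsto (H ω)).comp ((tendsto_add_atTop_iff_nat 1).2 hω)
  refine le_of_tendsto hlim.norm (eventually_atTop.2 ⟨k, fun n hn => ?_⟩)
  have hcf : ∫ ω, Complex.exp (Complex.I * t * (sphAvg d Z (n + 1) ω : ℝ)) ∂P =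
      charFun (P.map (sphAvg d Z (n + 1))) t := by
    rw [charFun_apply_real, integral_map (hHr _).aemeasurable (by fun_prop)]
    refine integral_congr_ae (ae_of_all _ fun ω => ?_)
    simp only
    congr 1
    ring
  rw [hcf]
  refine (norm_charFun_sphAvg_le P (by omega) Z hZ hZind _ hφ hn t).trans ?_
  have hN : (0 : ℝ) < (((d + 1) * d ^ k : ℕ) : ℝ) := by positivity
  generalize (d + 1) * d ^ k = N at hk hck hN ⊢
  rw [Complex.norm_real, Real.norm_eq_abs]
  refine (pow_le_pow_left₀ (abs_nonneg _) (hdecay _ ?_) N).trans ?_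
  · rw [abs_mul, abs_of_pos (inv_pos.2 hN), inv_mul_le_iff₀ hN, mul_comm]
    exact hk
  · rw [← Real.exp_nat_mul, Real.exp_le_exp]
    have : (N : ℝ) * (-a * ((N : ℝ)⁻¹ * t) ^ 2) = -(a * (t ^ 2 / N)) := by field_simp
    rw [this]
    linarith
end
end
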